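/- Let X_1, …, X_n be upper extended negatively dependent random variables in a sub-linear expectation space with dominating constant K ≥ 1 and 𝔼[X_k] ≤ 0 for each k. Set S_n = Σ_{k=1}^n X_k and B_n = Σ_{k=1}^n 𝔼[X_k²]. Then for all x, y > 0: 𝕍(S_n ≥ x) ≤ 𝕍(max_{k≤n} X_k ≥ y) + K·exp{ −x²/(2(xy + B_n)) · (1 + (2/3)·ln(1 + xy/B_n)) }. -/

import Mathlib

open Filter MeasureTheory
open scoped ENNReal NNReal

noncomputable section

/-- A sub-linear expectation on `Ω`: a monotone, constant-preserving, sub-additive,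
positively homogeneous functional on real random variables (with values in the
extended reals, so that random variables without a finite expectation are allowed). -/
structure SublinearExp (Ω : Type) where
  E : (Ω → ℝ) → EReal
  mono : ∀ X Y : Ω → ℝ, (∀ ω, X ω ≤ Y ω) → E X ≤ E Y
  const_eq : ∀ c : ℝ, E (fun _ => c) = (c : EReal)
  subadd : ∀ X Y : Ω → ℝ, E (fun ω => X ω + Y ω) ≤ E X + E Y
  pos_homog : ∀ lam : ℝ, 0 ≤ lam → ∀ X : Ω → ℝ,
    E (fun ω => lam * X ω) = (lam : EReal) * E X

namespace SublinearExp

variable {Ω : Type}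

/-- The conjugate expectation `ℰ[X] := −𝔼[−X]`. -/
def cE (SL : SublinearExp Ω) (X : Ω → ℝ) : EReal := - SL.E fun ω => - X ω

/-- The upper capacity `𝕍(A) := inf{𝔼[ξ] : 1_A ≤ ξ}`. -/
def V (SL : SublinearExp Ω) (A : Set Ω) : ℝ :=
  sInf {x : ℝ | ∃ ξ : Ω → ℝ,
    (∀ ω, A.indicator (fun _ => (1 : ℝ)) ω ≤ ξ ω) ∧ SL.E ξ = (x : EReal)}

/-- The lower capacity `𝓋(A) := 1 − 𝕍(Aᶜ)`. -/
def vLow (SL : SublinearExp Ω) (A : Set Ω) : ℝ := 1 - SL.V Aᶜ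

/-- The Choquet integral `C_𝕍(X) := ∫₀^∞ 𝕍(X ≥ t) dt` (of a non-negative r.v.). -/
def Choquet (SL : SublinearExp Ω) (X : Ω → ℝ) : ℝ≥0∞ :=
  ∫⁻ t in Set.Ioi (0 : ℝ), ENNReal.ofReal (SL.V {ω | t ≤ X ω})

/-- The outer capacity `𝕍*(A) := inf{Σ_n 𝕍(A_n) : A ⊆ ∪_n A_n}`. -/
def Vout (SL : SublinearExp Ω) (A : Set Ω) : ℝ≥0∞ :=
  ⨅ (B : ℕ → Set Ω) (_ : A ⊆ ⋃ n, B n), ∑' n, ENNReal.ofReal (SL.V (B n))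

/-- The upper capacity is continuous: continuous from below and from above. -/
def ContinuousCapacity (SL : SublinearExp Ω) : Prop :=
  (∀ A : ℕ → Set Ω, Monotone A →
    Tendsto (fun n => SL.V (A n)) atTop (nhds (SL.V (⋃ n, A n)))) ∧
  (∀ A : ℕ → Set Ω, Antitone A →
    Tendsto (fun n => SL.V (A n)) atTop (nhds (SL.V (⋂ n, A n))))

/-- Bounded Lipschitz function on ℝ. -/
def IsBLip (g : ℝ → ℝ) : Prop :=
  (∃ L : NNReal, LipschitzWith L g) ∧ ∃ M : ℝ, ∀ x, |g x| ≤ M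

/-- Local Lipschitz function on ℝ: `|φ(x) − φ(y)| ≤ C(1+|x|^m+|y|^m)|x−y|`. -/
def IsLocLip (φ : ℝ → ℝ) : Prop :=
  ∃ (C : ℝ) (m : ℕ), ∀ x y : ℝ, |φ x - φ y| ≤ C * (1 + |x| ^ m + |y| ^ m) * |x - y|

/-- Upper extended negative dependence (finite family) with dominating constant `K`:
`𝔼[∏ g_i(X_i)] ≤ K ∏ 𝔼[g_i(X_i)]` for all non-negative bounded Lipschitz
non-decreasing `g_i`.  (Expectations of bounded functions are finite, whence
the `toReal`.) -/
def UENDFin (SL : SublinearExp Ω) (K : ℝ) {n : ℕ} (X : Fin n → Ω → ℝ) : Prop :=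
  ∀ g : Fin n → ℝ → ℝ, (∀ i, IsBLip (g i)) → (∀ i, Monotone (g i)) →
    (∀ i x, 0 ≤ g i x) →
    SL.E (fun ω => ∏ i, g i (X i ω)) ≤
      ((K * ∏ i, (SL.E fun ω => g i (X i ω)).toReal : ℝ) : EReal)

/-- Upper extended negative dependence for a sequence. -/
def UEND (SL : SublinearExp Ω) (K : ℝ) (X : ℕ → Ω → ℝ) : Prop :=
  ∀ n : ℕ, ∀ g : ℕ → ℝ → ℝ, (∀ i, IsBLip (g i)) → (∀ i, Monotone (g i)) →
    (∀ i x, 0 ≤ g i x) →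
    SL.E (fun ω => ∏ i ∈ Finset.range n, g i (X i ω)) ≤
      ((K * ∏ i ∈ Finset.range n, (SL.E fun ω => g i (X i ω)).toReal : ℝ) : EReal)

/-- Lower extended negative dependence for a sequence. -/
def LEND (SL : SublinearExp Ω) (K : ℝ) (X : ℕ → Ω → ℝ) : Prop :=
  ∀ n : ℕ, ∀ g : ℕ → ℝ → ℝ, (∀ i, IsBLip (g i)) → (∀ i, Antitone (g i)) →
    (∀ i x, 0 ≤ g i x) →
    SL.E (fun ω => ∏ i ∈ Finset.range n, g i (X i ω)) ≤
      ((K * ∏ i ∈ Finset.range n, (SL.E fun ω => g i (X i ω)).toReal : ℝ) : EReal)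

/-- Extended negative dependence = upper and lower END. -/
def END (SL : SublinearExp Ω) (K : ℝ) (X : ℕ → Ω → ℝ) : Prop :=
  UEND SL K X ∧ LEND SL K X

/-- Upper extended negative dependence under the conjugate expectation `ℰ`
(finite family). -/
def UENDFinConj (SL : SublinearExp Ω) (K : ℝ) {n : ℕ} (X : Fin n → Ω → ℝ) : Prop :=
  ∀ g : Fin n → ℝ → ℝ, (∀ i, IsBLip (g i)) → (∀ i, Monotone (g i)) →
    (∀ i x, 0 ≤ g i x) →
    SL.cE (fun ω => ∏ i, g i (X i ω)) ≤
      ((K * ∏ i, (SL.cE fun ω => g i (X i ω)).toReal : ℝ) : EReal)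

/-- Upper extended negative dependence under the conjugate expectation (sequence). -/
def UENDconj (SL : SublinearExp Ω) (K : ℝ) (X : ℕ → Ω → ℝ) : Prop :=
  ∀ n : ℕ, ∀ g : ℕ → ℝ → ℝ, (∀ i, IsBLip (g i)) → (∀ i, Monotone (g i)) →
    (∀ i x, 0 ≤ g i x) →
    SL.cE (fun ω => ∏ i ∈ Finset.range n, g i (X i ω)) ≤
      ((K * ∏ i ∈ Finset.range n, (SL.cE fun ω => g i (X i ω)).toReal : ℝ) : EReal)

/-- Lower extended negative dependence under the conjugate expectation (sequence). -/
def LENDconj (SL : SublinearExp Ω) (K : ℝ) (X : ℕ → Ω → ℝ) : Prop :=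
  ∀ n : ℕ, ∀ g : ℕ → ℝ → ℝ, (∀ i, IsBLip (g i)) → (∀ i, Antitone (g i)) →
    (∀ i x, 0 ≤ g i x) →
    SL.cE (fun ω => ∏ i ∈ Finset.range n, g i (X i ω)) ≤
      ((K * ∏ i ∈ Finset.range n, (SL.cE fun ω => g i (X i ω)).toReal : ℝ) : EReal)

/-- Extended negative dependence under the conjugate expectation. -/
def ENDconj (SL : SublinearExp Ω) (K : ℝ) (X : ℕ → Ω → ℝ) : Prop :=
  UENDconj SL K X ∧ LENDconj SL K X

/-- Extended independence of a sequence: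
`𝔼[∏ ψ_i(X_i)] = ∏ 𝔼[ψ_i(X_i)]` for non-negative local Lipschitz `ψ_i`,
whenever the expectations involved are finite. -/
def ExtIndep (SL : SublinearExp Ω) (X : ℕ → Ω → ℝ) : Prop :=
  ∀ n : ℕ, ∀ ψ : ℕ → ℝ → ℝ, (∀ i, IsLocLip (ψ i)) → (∀ i x, 0 ≤ ψ i x) →
    (∀ i ∈ Finset.range n, SL.E (fun ω => ψ i (X i ω)) ≠ ⊤) →
    SL.E (fun ω => ∏ i ∈ Finset.range n, ψ i (X i ω)) =
      ((∏ i ∈ Finset.range n, (SL.E fun ω => ψ i (X i ω)).toReal : ℝ) : EReal)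

/-- Extended independence of two random variables. -/
def ExtIndepPair (SL : SublinearExp Ω) (Y Z : Ω → ℝ) : Prop :=
  ∀ ψ₁ ψ₂ : ℝ → ℝ, IsLocLip ψ₁ → IsLocLip ψ₂ →
    (∀ x, 0 ≤ ψ₁ x) → (∀ x, 0 ≤ ψ₂ x) →
    SL.E (fun ω => ψ₁ (Y ω)) ≠ ⊤ → SL.E (fun ω => ψ₂ (Z ω)) ≠ ⊤ →
    SL.E (fun ω => ψ₁ (Y ω) * ψ₂ (Z ω)) =
      (((SL.E fun ω => ψ₁ (Y ω)).toReal * (SL.E fun ω => ψ₂ (Z ω)).toReal : ℝ) : EReal)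

/-- Identically distributed: `𝔼[φ(X_i)] = 𝔼[φ(X_1)]` for all local Lipschitz `φ`. -/
def IdentDist (SL : SublinearExp Ω) (X : ℕ → Ω → ℝ) : Prop :=
  ∀ (i : ℕ) (φ : ℝ → ℝ), IsLocLip φ →
    SL.E (fun ω => φ (X i ω)) = SL.E fun ω => φ (X 0 ω)

end SublinearExp

/-- `log x = ln(x ∨ e)`. -/
def paperLog (x : ℝ) : ℝ := Real.log (max x (Real.exp 1))

/-- `a_n = √(2 n log log n)` with the above convention for `log`. -/
def lilA (n : ℕ) : ℝ := Real.sqrt (2 * n * paperLog (paperLog n))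

theorem exp_le_quadratic_of_nonpos {v : ℝ} (hv : v ≤ 0) : Real.exp v ≤ 1 + v + v ^ 2 / 2 := by
  have h := Real.quadratic_le_exp_of_nonneg (neg_nonneg.mpr hv)
  have hm : Real.exp v * Real.exp (-v) = 1 := by rw [← Real.exp_add]; simp
  nlinarith [Real.exp_pos v, mul_le_mul_of_nonneg_left h (Real.exp_pos v).le, sq_nonneg (v ^ 2),
    sq_nonneg (v + 1), mul_le_mul_of_nonneg_left h
      (show (0 : ℝ) ≤ 1 + v + v ^ 2 / 2 by nlinarith [sq_nonneg (v + 1)]), Real.exp_pos (-v)]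

theorem hasSum_exp_sub_one_sub (v : ℝ) :
    HasSum (fun k : ℕ => v ^ (k + 2) / (k + 2).factorial) (Real.exp v - 1 - v) := by
  have h : HasSum (fun k : ℕ => v ^ k / k.factorial) (Real.exp v) := by
    rw [Real.exp_eq_exp_ℝ]
    exact NormedSpace.expSeries_div_hasSum_exp v
  have := (hasSum_nat_add_iff' 2).mpr h
  simpa [Finset.sum_range_succ, sub_sub] using this

/-- The function `v ↦ (exp v - 1 - v) / v ^ 2` is bounded on `(-∞, a]` by its value at `a`. -/
theorem exp_le_one_add_add_mul_sq {v a : ℝ} (ha : 0 < a) (hva : v ≤ a) :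
    Real.exp v ≤ 1 + v + (Real.exp a - 1 - a) / a ^ 2 * v ^ 2 := by
  rcases le_total v 0 with hv | hv
  · have h := exp_le_quadratic_of_nonpos hv
    have h2 : 1 / 2 ≤ (Real.exp a - 1 - a) / a ^ 2 := by
      rw [le_div_iff₀ (by positivity)]
      linarith [Real.quadratic_le_exp_of_nonneg ha.le]
    nlinarith [sq_nonneg v]
  · have h : a ^ 2 * (Real.exp v - 1 - v) ≤ v ^ 2 * (Real.exp a - 1 - a) := by
      refine hasSum_le (fun k => ?_) ((hasSum_exp_sub_one_sub v).mul_left (a ^ 2))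
        ((hasSum_exp_sub_one_sub a).mul_left (v ^ 2))
      have hk : v ^ k ≤ a ^ k := pow_le_pow_left₀ hv hva k
      have h3 : a ^ 2 * v ^ (k + 2) ≤ v ^ 2 * a ^ (k + 2) := by
        calc a ^ 2 * v ^ (k + 2) = (a ^ 2 * v ^ 2) * v ^ k := by ring
          _ ≤ (a ^ 2 * v ^ 2) * a ^ k := by gcongr
          _ = v ^ 2 * a ^ (k + 2) := by ring
      rw [← mul_div_assoc, ← mul_div_assoc]
      gcongr
    have h4 : Real.exp v - 1 - v ≤ (Real.exp a - 1 - a) / a ^ 2 * v ^ 2 := by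
      rw [div_mul_eq_mul_div, le_div_iff₀ (by positivity)]
      linarith
    linarith

theorem div_le_log_one_add {u : ℝ} (hu : 0 ≤ u) :
    (u + 3 / 2 * u ^ 2) / (1 + 2 * u + 2 / 3 * u ^ 2) ≤ Real.log (1 + u) := by
  let f : ℝ → ℝ := fun u =>
    Real.log (1 + u) - (u + 3 / 2 * u ^ 2) / (1 + 2 * u + 2 / 3 * u ^ 2)
  have hd : ∀ u : ℝ, 0 ≤ u → HasDerivAt f (1 / (1 + u) -
      ((1 + 3 / 2 * (2 * u)) * (1 + 2 * u + 2 / 3 * u ^ 2) -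
        (u + 3 / 2 * u ^ 2) * (2 + 2 / 3 * (2 * u))) / (1 + 2 * u + 2 / 3 * u ^ 2) ^ 2) u := by
    intro u hu
    have hsq : HasDerivAt (fun u : ℝ => u ^ 2) (2 * u) u := by simpa using hasDerivAt_pow 2 u
    have hlog := ((hasDerivAt_id' u).const_add 1).log (by positivity)
    have hN := (hasDerivAt_id' u).add (hsq.const_mul (3 / 2))
    have hD := (((hasDerivAt_id' u).const_mul 2).const_add 1).add (hsq.const_mul (2 / 3))
    have hQ := hN.div hD (by simp only [Pi.add_apply]; positivity)
    exact (hlog.sub hQ).congr_deriv (by simp)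
  have hmono : MonotoneOn f (Set.Ici 0) := by
    refine monotoneOn_of_deriv_nonneg (convex_Ici 0)
      (fun u hu => (hd u hu).continuousAt.continuousWithinAt)
      (fun u hu => (hd u (interior_subset hu)).differentiableAt.differentiableWithinAt) ?_
    intro u hu
    have hu0 : 0 ≤ u := interior_subset hu
    rw [(hd u hu0).deriv, sub_nonneg, div_le_div_iff₀ (by positivity) (by positivity)]
    nlinarith [pow_nonneg hu0 3, pow_nonneg hu0 4]
  have h := hmono (Set.mem_Ici.mpr le_rfl) (Set.mem_Ici.mpr hu) hu
  simp only [f] at h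
  norm_num at h
  linarith

theorem bennett_exponent_le {u : ℝ} (hu : 0 ≤ u) :
    u ^ 2 / (2 * (1 + u)) * (1 + 2 / 3 * Real.log (1 + u)) ≤ (1 + u) * Real.log (1 + u) - u := by
  have h := div_le_log_one_add hu
  rw [div_le_iff₀ (by positivity)] at h
  rw [div_mul_eq_mul_div, div_le_iff₀ (by positivity)]
  nlinarith

/-- The Chernoff exponent, at a suitable `t`, is at most the exponent in the inequality. -/
theorem exists_chernoff_exponent_le {B x y : ℝ} (hB : 0 ≤ B) (hx : 0 < x) (hy : 0 < y) :
    ∃ t : ℝ, 0 < t ∧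
      -(t * x) + (Real.exp (t * y) - 1 - t * y) / y ^ 2 * B ≤
        -(x ^ 2 / (2 * (x * y + B))) * (1 + (2 / 3) * Real.log (1 + x * y / B)) := by
  rcases hB.eq_or_lt with rfl | hB
  · refine ⟨1 / (2 * y), by positivity, le_of_eq ?_⟩
    simp
    field_simp
  · have hu : 0 < x * y / B := by positivity
    have hlog : 0 < Real.log (1 + x * y / B) := Real.log_pos (by linarith)
    refine ⟨Real.log (1 + x * y / B) / y, by positivity, ?_⟩
    have h := mul_le_mul_of_nonneg_left (bennett_exponent_le hu.le)
      (show 0 ≤ B / y ^ 2 by positivity)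
    rw [div_mul_cancel₀ _ hy.ne', Real.exp_log (by positivity)]
    generalize Real.log (1 + x * y / B) = L at *
    have e1 : B / y ^ 2 * ((x * y / B) ^ 2 / (2 * (1 + x * y / B)) * (1 + 2 / 3 * L)) =
        x ^ 2 / (2 * (x * y + B)) * (1 + 2 / 3 * L) := by
      have : B + x * y ≠ 0 := by positivity
      have : x * y + B ≠ 0 := by positivity
      field_simp
      ring
    have e2 : -(L / y * x) + (1 + x * y / B - 1 - L) / y ^ 2 * B =
        -(B / y ^ 2 * ((1 + x * y / B) * L - x * y / B)) := by
      field_simp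
      ring
    rw [e2, neg_mul, ← e1]
    exact neg_le_neg h

namespace SublinearExp

variable {Ω : Type} (SL : SublinearExp Ω)

theorem E_nonneg {ξ : Ω → ℝ} (h : ∀ ω, 0 ≤ ξ ω) : 0 ≤ SL.E ξ := by
  simpa using (SL.const_eq 0).symm.le.trans (SL.mono _ ξ h)

theorem V_le_of_E_le {A : Set Ω} {ξ : Ω → ℝ}
    (h : ∀ ω, A.indicator (fun _ => (1 : ℝ)) ω ≤ ξ ω) {c : ℝ} (hc : SL.E ξ ≤ c) :
    SL.V A ≤ c := by
  have hind : ∀ ω, (0 : ℝ) ≤ A.indicator (fun _ => (1 : ℝ)) ω :=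
    fun ω => Set.indicator_nonneg (fun _ _ => zero_le_one) ω
  have h0 : 0 ≤ SL.E ξ := SL.E_nonneg fun ω => (hind ω).trans (h ω)
  have hfin : SL.E ξ = ((SL.E ξ).toReal : EReal) :=
    (EReal.coe_toReal (ne_top_of_le_ne_top (EReal.coe_ne_top c) hc)
      (ne_bot_of_le_ne_bot EReal.zero_ne_bot h0)).symm
  have hbdd : BddBelow {x : ℝ | ∃ ξ : Ω → ℝ,
      (∀ ω, A.indicator (fun _ => (1 : ℝ)) ω ≤ ξ ω) ∧ SL.E ξ = (x : EReal)} := by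
    refine ⟨0, ?_⟩
    rintro x ⟨ζ, hζ, hx⟩
    have := SL.E_nonneg fun ω => (hind ω).trans (hζ ω)
    rw [hx] at this
    exact_mod_cast this
  refine (csInf_le hbdd ⟨ξ, h, hfin⟩).trans ?_
  rw [hfin] at hc
  exact_mod_cast hc

theorem V_le_V_add {A C : Set Ω} {η : Ω → ℝ} {c : ℝ}
    (h : ∀ ω, A.indicator (fun _ => (1 : ℝ)) ω ≤ C.indicator (fun _ => (1 : ℝ)) ω + η ω)
    (hη : SL.E η ≤ c) : SL.V A ≤ SL.V C + c := by
  rw [← sub_le_iff_le_add]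
  refine le_csInf ⟨1, fun _ => 1, fun ω => ?_, SL.const_eq 1⟩ ?_
  · exact Set.indicator_le_self' (fun _ _ => zero_le_one) ω
  · rintro v ⟨ξ, hξ, hv⟩
    rw [sub_le_iff_le_add]
    refine SL.V_le_of_E_le (ξ := fun ω => ξ ω + η ω) (fun ω => ?_) ?_
    · linarith [h ω, hξ ω]
    · refine (SL.subadd ξ η).trans ?_
      rw [hv, EReal.coe_add]
      gcongr

theorem E_exp_mul_min_le {X : Ω → ℝ} (hX : SL.E X ≤ 0) {b : ℝ}
    (hb : SL.E (fun ω => X ω ^ 2) = b) {t y : ℝ} (ht : 0 < t) (hy : 0 < y) :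
    SL.E (fun ω => Real.exp (t * min (X ω) y)) ≤
      (Real.exp ((Real.exp (t * y) - 1 - t * y) / y ^ 2 * b) : ℝ) := by
  set c := (Real.exp (t * y) - 1 - t * y) / y ^ 2 with hc
  have hc0 : 0 ≤ c := div_nonneg (by linarith [Real.add_one_le_exp (t * y)]) (sq_nonneg y)
  have hpt : ∀ ω, Real.exp (t * min (X ω) y) ≤ 1 + (t * X ω + c * X ω ^ 2) := by
    intro ω
    have h1 := exp_le_one_add_add_mul_sq (v := t * min (X ω) y) (a := t * y) (by positivity)
      (by gcongr; exact min_le_right _ _)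
    have h2 : (Real.exp (t * y) - 1 - t * y) / (t * y) ^ 2 * (t * min (X ω) y) ^ 2 =
        c * min (X ω) y ^ 2 := by
      rw [hc]
      field_simp
    have h3 : min (X ω) y ^ 2 ≤ X ω ^ 2 := by
      rcases min_cases (X ω) y with ⟨h, _⟩ | ⟨h, _⟩ <;> rw [h]
      gcongr
    have h4 : t * min (X ω) y ≤ t * X ω := by
      gcongr
      exact min_le_left _ _
    have h5 := mul_le_mul_of_nonneg_left h3 hc0
    linarith
  have htX : SL.E (fun ω => t * X ω) ≤ 0 := by
    rw [SL.pos_homog t ht.le]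
    simpa using mul_le_mul_of_nonneg_left hX (EReal.coe_nonneg.mpr ht.le)
  calc SL.E (fun ω => Real.exp (t * min (X ω) y))
      ≤ SL.E (fun ω => 1 + (t * X ω + c * X ω ^ 2)) := SL.mono _ _ hpt
    _ ≤ SL.E (fun _ => 1) + SL.E (fun ω => t * X ω + c * X ω ^ 2) := SL.subadd _ _
    _ ≤ SL.E (fun _ => 1) + (SL.E (fun ω => t * X ω) + SL.E (fun ω => c * X ω ^ 2)) := by
        gcongr
        exact SL.subadd _ _
    _ ≤ ((1 : ℝ) : EReal) + (0 + ((c * b : ℝ) : EReal)) := by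
        rw [SL.const_eq, SL.pos_homog c hc0, hb, EReal.coe_mul]
        gcongr
    _ ≤ (Real.exp (c * b) : ℝ) := by
        rw [zero_add, ← EReal.coe_add, EReal.coe_le_coe_iff, add_comm]
        exact Real.add_one_le_exp _

end SublinearExp

theorem isBLip_exp_mul_min {t y : ℝ} (ht : 0 < t) :
    SublinearExp.IsBLip fun z => Real.exp (t * min z y) := by
  refine ⟨⟨Real.toNNReal (t * Real.exp (t * y)), LipschitzWith.of_le_add_mul _ fun a b => ?_⟩,
    Real.exp (t * y), fun z => ?_⟩
  · rw [Real.coe_toNNReal _ (by positivity)]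
    have hd : t * (min a y - min b y) ≤ t * dist a b := by
      refine mul_le_mul_of_nonneg_left ?_ ht.le
      rw [Real.dist_eq]
      exact (le_abs_self _).trans (abs_min_sub_min_le_max a y b y |>.trans (by simp))
    have h1 := Real.add_one_le_exp (t * min b y - t * min a y)
    have h2 : Real.exp (t * min b y) =
        Real.exp (t * min a y) * Real.exp (t * min b y - t * min a y) := by
      rw [← Real.exp_add]
      ring_nf
    have h3 : Real.exp (t * min a y) ≤ Real.exp (t * y) := by
      gcongr
      exact min_le_right _ _
    have hpos := Real.exp_pos (t * min a y)
    have h4 : Real.exp (t * min a y) * (t * dist a b) ≤ Real.exp (t * y) * (t * dist a b) := by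
      gcongr
    nlinarith
  · rw [abs_of_pos (Real.exp_pos _)]
    gcongr
    exact min_le_right _ _

/-- Theorem 3.1(a): exponential inequality for upper extended negatively dependent
random variables. -/
theorem stmt0 {Ω : Type} (SL : SublinearExp Ω) (n : ℕ) (X : Fin n → Ω → ℝ)
    (K : ℝ) (hK : 1 ≤ K)
    (hUEND : SublinearExp.UENDFin SL K X)
    (hmean : ∀ k, SL.E (X k) ≤ 0)
    (B : ℝ) (hB : (B : EReal) = ∑ k, SL.E fun ω => (X k ω) ^ 2) :
    ∀ x y : ℝ, 0 < x → 0 < y →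
      SL.V {ω | x ≤ ∑ k, X k ω} ≤
        SL.V {ω | ∃ k, y ≤ X k ω} +
          K * Real.exp (-(x ^ 2 / (2 * (x * y + B))) *
            (1 + (2 / 3) * Real.log (1 + x * y / B))) := by
  intro x y hx hy
  have hnn : ∀ k, 0 ≤ SL.E fun ω => X k ω ^ 2 := fun k => SL.E_nonneg fun ω => sq_nonneg _
  have hfin : ∀ k, ∃ b : ℝ, SL.E (fun ω => X k ω ^ 2) = b := by
    intro k
    have hle : SL.E (fun ω => X k ω ^ 2) ≤ (B : EReal) := by
      rw [hB]
      exact Finset.single_le_sum (f := fun k => SL.E fun ω => X k ω ^ 2)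
        (fun i _ => hnn i) (Finset.mem_univ k)
    exact ⟨_, (EReal.coe_toReal (ne_top_of_le_ne_top (EReal.coe_ne_top B) hle)
      (ne_bot_of_le_ne_bot EReal.zero_ne_bot (hnn k))).symm⟩
  choose b hb using hfin
  have hBsum : B = ∑ k, b k := by
    simp only [hb] at hB
    have hcoe : ((∑ k, b k : ℝ) : EReal) = ∑ k, (b k : EReal) :=
      map_sum (⟨⟨Real.toEReal, EReal.coe_zero⟩, EReal.coe_add⟩ : ℝ →+ EReal) b Finset.univ
    rw [← hcoe] at hB
    exact_mod_cast hB
  have hB0 : 0 ≤ B := by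
    have h := Finset.sum_nonneg fun k (_ : k ∈ Finset.univ) => hnn k
    rw [← hB] at h
    exact_mod_cast h
  obtain ⟨t, ht, hexp⟩ := exists_chernoff_exponent_le hB0 hx hy
  set c := (Real.exp (t * y) - 1 - t * y) / y ^ 2
  have hprod := hUEND (fun _ z => Real.exp (t * min z y)) (fun _ => isBLip_exp_mul_min ht)
    (fun _ a b hab => by dsimp only; gcongr) (fun _ _ => (Real.exp_pos _).le)
  have hle : ∏ k, (SL.E fun ω => Real.exp (t * min (X k ω) y)).toReal ≤ Real.exp (c * B) := by
    rw [hBsum, Finset.mul_sum, Real.exp_sum]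
    refine Finset.prod_le_prod (fun k _ => ?_) fun k _ => ?_
    · exact EReal.toReal_nonneg (SL.E_nonneg fun ω => (Real.exp_pos _).le)
    · have h := SL.E_exp_mul_min_le (hmean k) (hb k) ht hy
      exact EReal.toReal_le_toReal h (ne_bot_of_le_ne_bot EReal.zero_ne_bot
        (SL.E_nonneg fun ω => (Real.exp_pos _).le)) (EReal.coe_ne_top _)
  refine SL.V_le_V_add
    (η := fun ω => Real.exp (-(t * x)) * ∏ k, Real.exp (t * min (X k ω) y)) (fun ω => ?_) ?_
  · have hη : 0 < Real.exp (-(t * x)) * ∏ k, Real.exp (t * min (X k ω) y) := by positivity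
    by_cases hm : ∃ k, y ≤ X k ω
    · rw [Set.indicator_of_mem (show ω ∈ {ω | ∃ k, y ≤ X k ω} from hm)]
      have : Set.indicator {ω | x ≤ ∑ k, X k ω} (fun _ => (1 : ℝ)) ω ≤ 1 :=
        Set.indicator_le_self' (fun _ _ => zero_le_one) ω
      linarith
    · rw [Set.indicator_of_notMem (show ω ∉ {ω | ∃ k, y ≤ X k ω} from hm), zero_add]
      by_cases hS : ω ∈ {ω | x ≤ ∑ k, X k ω}
      swap
      · rw [Set.indicator_of_notMem hS]
        exact hη.le
      rw [Set.indicator_of_mem hS]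
      push Not at hm
      have hmin : ∀ k, min (X k ω) y = X k ω := fun k => min_eq_left (hm k).le
      simp only [hmin]
      rw [← Real.exp_sum, ← Real.exp_add, ← Finset.mul_sum, Real.one_le_exp_iff]
      have := mul_le_mul_of_nonneg_left (show x ≤ ∑ k, X k ω from hS) ht.le
      linarith
  · rw [SL.pos_homog _ (Real.exp_pos _).le]
    refine (mul_le_mul_of_nonneg_left hprod
      (EReal.coe_nonneg.mpr (Real.exp_pos _).le)).trans ?_
    rw [← EReal.coe_mul, EReal.coe_le_coe_iff]
    calc Real.exp (-(t * x)) *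
          (K * ∏ k, (SL.E fun ω => Real.exp (t * min (X k ω) y)).toReal)
        ≤ Real.exp (-(t * x)) * (K * Real.exp (c * B)) := by gcongr
      _ = K * Real.exp (-(t * x) + c * B) := by rw [Real.exp_add]; ring
      _ ≤ _ := by gcongr
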